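/- For V ∈ Z_p^d and α > 0, the function f(x) = e^{2πi{ξ·x}_p} on Z_p^d is an eigenfunction of the directional Vladimirov–Taibleson operator ∂_V^α f(x) = ((1-p^α)/(1-p^{-(α+1)})) ∫_{Z_p} (f(x - tV) - f(x))/|t|_p^{α+1} dt, with eigenvalue |V·ξ|_p^α - (1-p^{-1})/(1-p^{-(α+1)}) when |V·ξ|_p > 1, and eigenvalue 0 when |V·ξ|_p ≤ 1. -/

import Mathlib

open MeasureTheory

noncomputable section

variable (p : ℕ) [Fact p.Prime]

/-- Truncation of a `p`-adic number to a `p`-adic integer (`0` if it is not an integer). -/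
def padicToInt (x : ℚ_[p]) : ℤ_[p] := if h : ‖x‖ ≤ 1 then ⟨x, h⟩ else 0

/-- The `p`-adic fractional part `{x}_p`, as a rational number. -/
def padicFract (x : ℚ_[p]) : ℚ :=
  ((padicToInt p (x * (p : ℚ_[p]) ^ (-x.valuation).toNat)).appr (-x.valuation).toNat : ℚ) /
    (p : ℚ) ^ (-x.valuation).toNat

/-- The additive character `x ↦ e^{2πi {x}_p}` of `ℚ_p`. -/
def eChar (x : ℚ_[p]) : ℂ := Complex.exp (2 * Real.pi * Complex.I * (padicFract p x : ℂ))

instance : MeasurableSpace ℤ_[p] := borel _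
instance : BorelSpace ℤ_[p] := ⟨rfl⟩

/-- The normalizing constant `(1 - p^α)/(1 - p^{-(α+1)})` of the Vladimirov–Taibleson
operator. -/
def vtConst (α : ℝ) : ℝ := (1 - (p : ℝ) ^ α) / (1 - (p : ℝ) ^ (-(α + 1)))

/-- The constant `(1 - p^{-1})/(1 - p^{-(α+1)})`. -/
def vtShift (α : ℝ) : ℝ := (1 - (p : ℝ)⁻¹) / (1 - (p : ℝ) ^ (-(α + 1)))

variable (d : ℕ)

/-- Pairing of a `ℚ_p`-covector with a `ℤ_p`-vector. -/
def dotQZ (ξ : Fin d → ℚ_[p]) (x : Fin d → ℤ_[p]) : ℚ_[p] := ∑ i, ξ i * (x i : ℚ_[p])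

/-- The directional Vladimirov–Taibleson operator of order `α` in the direction `V` on
`ℤ_p^d`, with respect to the normalized Haar measure `μ` on `ℤ_p`:
`∂_V^α f(x) = ((1-p^α)/(1-p^{-(α+1)})) ∫_{ℤ_p} (f(x - tV) - f(x))/|t|_p^{α+1} dt`. -/
def dirVT (α : ℝ) (V : Fin d → ℤ_[p]) (μ : Measure ℤ_[p])
    (f : (Fin d → ℤ_[p]) → ℂ) (x : Fin d → ℤ_[p]) : ℂ :=
  (vtConst p α : ℂ) * ∫ t : ℤ_[p], (f (x - t • V) - f x) / ((‖t‖ ^ (α + 1) : ℝ) : ℂ) ∂μ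

/-!
Since `e` is an additive character of `ℚ_p`, the operator multiplies `u ↦ e(ξ · u)` by
`c_α ∫ (ψ t - 1) / |t|^{α+1} dt`, where `ψ t = e(-t (V · ξ))` is a character of `ℤ_p`. If
`|V · ξ| ≤ 1`, then `ψ = 1` and the integral vanishes. If `|V · ξ| = p^m` with `m ≥ 1`, then `ψ` is
trivial on `p^k ℤ_p` exactly when `k ≥ m`, so `∫ (ψ - 1)` over `p^k ℤ_p` is `-p^{-k}` for `k < m`
and `0` for `k ≥ m`. Summation by parts writes the kernel `|t|^{-(α+1)}`, for `|t| > p^{-m}`, as a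
combination of the indicators of the balls `p^k ℤ_p` with `k < m`, which
turns the integral into a geometric sum.
-/

section Haar

variable {G : Type*} [AddGroup G] [MeasurableSpace G] [MeasurableAdd G] (μ : Measure G)

lemma setIntegral_addChar_eq_zero [μ.IsAddRightInvariant] {𝕜 : Type*} [RCLike 𝕜]
    (ψ : AddChar G 𝕜) (H : AddSubgroup G) {g : G} (hg : g ∈ H) (hψ : ψ g ≠ 1) :
    ∫ t in H, ψ t ∂μ = 0 := by
  have hH : (· + g) ⁻¹' (H : Set G) = H := Set.ext fun t => H.add_mem_cancel_right hg
  have htranslate : (∫ t in H, ψ t ∂μ) * ψ g = ∫ t in H, ψ t ∂μ := by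
    rw [← integral_mul_const]
    simpa only [hH, ψ.map_add_eq_mul] using
      (measurePreserving_add_right μ g).setIntegral_preimage_emb
        (measurableEmbedding_addRight g) ψ H
  have hfactor : (∫ t in H, ψ t ∂μ) * (ψ g - 1) = 0 := by
    rw [mul_sub, htranslate, mul_one, sub_self]
  exact (mul_eq_zero.1 hfactor).resolve_right (sub_ne_zero.2 hψ)

lemma measureReal_addSubgroup_eq_inv_index [μ.IsAddLeftInvariant] [IsProbabilityMeasure μ]
    (H : AddSubgroup G) [H.FiniteIndex] (hH : MeasurableSet (H : Set G)) :
    μ.real H = (H.index : ℝ)⁻¹ := by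
  have h := congrArg ENNReal.toReal (H.index_mul_measure hH μ)
  rw [measure_univ, ENNReal.toReal_mul, ENNReal.toReal_natCast, ENNReal.toReal_one] at h
  exact eq_inv_of_mul_eq_one_right h

end Haar

lemma continuous_addChar_of_eventually_eq_one {G M : Type*} [AddGroup G] [TopologicalSpace G]
    [ContinuousSub G] [Monoid M] [TopologicalSpace M] {ψ : AddChar G M}
    (h : ∀ᶠ t in nhds 0, ψ t = 1) : Continuous ψ := by
  refine continuous_iff_continuousAt.2 fun t₀ => ?_
  have hsub : Filter.Tendsto (fun t => t - t₀) (nhds t₀) (nhds 0) := by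
    simpa using (continuous_sub_right t₀).tendsto t₀
  have hconst : (fun _ => ψ t₀) =ᶠ[nhds t₀] ψ := by
    filter_upwards [hsub.eventually h] with t ht
    rw [← sub_add_cancel t t₀, ψ.map_add_eq_mul, ht, one_mul]
  exact continuousAt_const.congr hconst

section Character

variable {p}

lemma norm_mul_pow_toNat_neg_valuation_le_one (x : ℚ_[p]) :
    ‖x * (p : ℚ_[p]) ^ (-x.valuation).toNat‖ ≤ 1 := by
  rcases eq_or_ne x 0 with rfl | hx
  · simp
  have hp : (1 : ℝ) < p := mod_cast (Fact.out : p.Prime).one_lt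
  rw [norm_mul, Padic.norm_eq_zpow_neg_valuation hx, Padic.norm_p_pow,
    ← zpow_add₀ (by positivity)]
  exact zpow_le_one_of_nonpos₀ hp.le (by lia)

lemma exists_padicFract_eq_div_pow (x : ℚ_[p]) :
    ∃ (a : ℤ) (n : ℕ), padicFract p x = a / (p : ℚ) ^ n :=
  ⟨_, _, rfl⟩

lemma exists_norm_eq_pow_succ_of_one_lt_norm {a : ℚ_[p]} (ha : 1 < ‖a‖) :
    ∃ M : ℕ, ‖a‖ = (p : ℝ) ^ (M + 1) := by
  have ha0 : a ≠ 0 := norm_pos_iff.1 (one_pos.trans ha)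
  have hp : (1 : ℝ) < p := mod_cast (Fact.out : p.Prime).one_lt
  have hnorm := Padic.norm_eq_zpow_neg_valuation ha0
  have hval : 0 < -a.valuation := (one_lt_zpow_iff_right₀ hp).1 (hnorm ▸ ha)
  obtain ⟨M, hM⟩ := Int.eq_succ_of_zero_lt hval
  exact ⟨M, by rw [hnorm, hM]; norm_cast⟩

lemma coe_padicToInt {x : ℚ_[p]} (hx : ‖x‖ ≤ 1) : (padicToInt p x : ℚ_[p]) = x := by
  have hdif : padicToInt p x = (⟨x, hx⟩ : ℤ_[p]) := dif_pos hx
  rw [hdif]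

lemma norm_sub_padicFract_le_one (x : ℚ_[p]) : ‖x - (padicFract p x : ℚ_[p])‖ ≤ 1 := by
  have hp : (p : ℚ_[p]) ≠ 0 := mod_cast (Fact.out : p.Prime).ne_zero
  have hpR : (0 : ℝ) < p := mod_cast (Fact.out : p.Prime).pos
  have hcoe := coe_padicToInt (norm_mul_pow_toNat_neg_valuation_le_one x)
  rw [padicFract]
  set n := (-x.valuation).toNat
  set y := padicToInt p (x * (p : ℚ_[p]) ^ n)
  have happr : ‖(y : ℚ_[p]) - y.appr n‖ ≤ (p : ℝ) ^ (-n : ℤ) := by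
    simpa [PadicInt.norm_def] using
      (PadicInt.norm_le_pow_iff_mem_span_pow _ _).2 (PadicInt.appr_spec n y)
  have hsplit : x - ((y.appr n / (p : ℚ) ^ n : ℚ) : ℚ_[p]) =
      ((y : ℚ_[p]) - y.appr n) / (p : ℚ_[p]) ^ n := by
    rw [hcoe]
    push_cast
    field_simp
  rwa [hsplit, norm_div, Padic.norm_p_pow, div_le_one (by positivity)]

lemma exists_int_eq_div_pow_of_norm_le_one {a : ℤ} {n : ℕ}
    (h : ‖(a : ℚ_[p]) / (p : ℚ_[p]) ^ n‖ ≤ 1) : ∃ c : ℤ, (a : ℚ) / (p : ℚ) ^ n = c := by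
  have hpR : (0 : ℝ) < p := mod_cast (Fact.out : p.Prime).pos
  have hp : (p : ℚ) ≠ 0 := mod_cast (Fact.out : p.Prime).ne_zero
  rw [norm_div, Padic.norm_p_pow, div_le_one (by positivity), Padic.norm_int_le_pow_iff_dvd] at h
  obtain ⟨c, rfl⟩ := h
  exact ⟨c, by push_cast; field_simp⟩

lemma eChar_eq_exp_of_norm_sub_le_one {x : ℚ_[p]} {a : ℤ} {n : ℕ}
    (h : ‖x - a / (p : ℚ_[p]) ^ n‖ ≤ 1) :
    eChar p x = Complex.exp (2 * Real.pi * Complex.I * (a / (p : ℂ) ^ n)) := by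
  have hpK : (p : ℚ_[p]) ≠ 0 := mod_cast (Fact.out : p.Prime).ne_zero
  have hp : (p : ℚ) ≠ 0 := mod_cast (Fact.out : p.Prime).ne_zero
  obtain ⟨b, m, hb⟩ := exists_padicFract_eq_div_pow x
  have hdiff : ‖((b * p ^ n - a * p ^ m : ℤ) : ℚ_[p]) / (p : ℚ_[p]) ^ (m + n)‖ ≤ 1 := by
    have hsplit : ((b * p ^ n - a * p ^ m : ℤ) : ℚ_[p]) / (p : ℚ_[p]) ^ (m + n) =
        (x - a / (p : ℚ_[p]) ^ n) - (x - (padicFract p x : ℚ_[p])) := by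
      rw [hb]
      push_cast
      field_simp
      ring
    rw [hsplit]
    exact (PadicInt.subring p).sub_mem h (norm_sub_padicFract_le_one x)
  obtain ⟨c, hc⟩ := exists_int_eq_div_pow_of_norm_le_one hdiff
  have hfract : padicFract p x = a / (p : ℚ) ^ n + c := by
    rw [hb, ← hc]
    push_cast
    field_simp
    ring
  rw [eChar, hfract, Complex.exp_eq_exp_iff_exists_int]
  exact ⟨c, by push_cast; ring⟩

lemma eChar_add (x y : ℚ_[p]) : eChar p (x + y) = eChar p x * eChar p y := by
  have hpK : (p : ℚ_[p]) ≠ 0 := mod_cast (Fact.out : p.Prime).ne_zero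
  have hpC : (p : ℂ) ≠ 0 := mod_cast (Fact.out : p.Prime).ne_zero
  obtain ⟨a, n, ha⟩ := exists_padicFract_eq_div_pow x
  obtain ⟨b, m, hb⟩ := exists_padicFract_eq_div_pow y
  have hsum : ‖x + y - ((a * p ^ m + b * p ^ n : ℤ) : ℚ_[p]) / (p : ℚ_[p]) ^ (n + m)‖ ≤ 1 := by
    have hsplit : x + y - ((a * p ^ m + b * p ^ n : ℤ) : ℚ_[p]) / (p : ℚ_[p]) ^ (n + m) =
        (x - (padicFract p x : ℚ_[p])) + (y - (padicFract p y : ℚ_[p])) := by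
      rw [ha, hb]
      push_cast
      field_simp
      ring
    rw [hsplit]
    exact (PadicInt.subring p).add_mem (norm_sub_padicFract_le_one x)
      (norm_sub_padicFract_le_one y)
  rw [eChar_eq_exp_of_norm_sub_le_one hsum, eChar, eChar, ha, hb, ← Complex.exp_add]
  congr 1
  push_cast
  field_simp
  ring

lemma eChar_eq_one_iff (x : ℚ_[p]) : eChar p x = 1 ↔ ‖x‖ ≤ 1 := by
  refine ⟨fun hx => ?_, fun hx => ?_⟩
  · obtain ⟨c, hc⟩ := Complex.exp_eq_one_iff.1 hx
    have hfract : padicFract p x = c := by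
      rw [mul_comm] at hc
      exact_mod_cast mul_right_cancel₀ Complex.two_pi_I_ne_zero hc
    have hsub := norm_sub_padicFract_le_one x
    rw [hfract, Rat.cast_intCast] at hsub
    simpa using (PadicInt.subring p).add_mem hsub (Padic.norm_int_le_one c)
  · rw [eChar_eq_exp_of_norm_sub_le_one (a := 0) (n := 0) (by simpa using hx)]
    simp

/-- The additive character `t ↦ e^{2πi{ta}_p}` of `ℤ_p` attached to `a : ℚ_p`. -/
def eCharInt (a : ℚ_[p]) : AddChar ℤ_[p] ℂ where
  toFun t := eChar p (t * a)
  map_zero_eq_one' := by simp [eChar_eq_one_iff]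
  map_add_eq_mul' s t := by rw [PadicInt.coe_add, add_mul, eChar_add]

lemma eCharInt_apply (a : ℚ_[p]) (t : ℤ_[p]) : eCharInt a t = eChar p (t * a) := rfl

lemma eCharInt_eq_one {a : ℚ_[p]} (ha : ‖a‖ ≤ 1) (t : ℤ_[p]) : eCharInt a t = 1 :=
  (eChar_eq_one_iff _).2 ((PadicInt.subring p).mul_mem t.2 ha)

end Character

section Ball

/-- The ball `p^k ℤ_p = {t | ‖t‖ ≤ p^{-k}}`, as an additive subgroup of `ℤ_p`. -/
def padicBall (k : ℕ) : AddSubgroup ℤ_[p] :=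
  (Ideal.span {(p : ℤ_[p]) ^ k}).toAddSubgroup

variable {p} in
lemma mem_padicBall_iff_norm_le {k : ℕ} {t : ℤ_[p]} :
    t ∈ padicBall p k ↔ ‖t‖ ≤ (p : ℝ) ^ (-k : ℤ) :=
  (PadicInt.norm_le_pow_iff_mem_span_pow t k).symm

variable {p} in
lemma mem_padicBall_iff_le_valuation {k : ℕ} {t : ℤ_[p]} (ht : t ≠ 0) :
    t ∈ padicBall p k ↔ k ≤ t.valuation :=
  PadicInt.mem_span_pow_iff_le_valuation t ht k

lemma coe_padicBall_zero : (padicBall p 0 : Set ℤ_[p]) = Set.univ :=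
  Set.eq_univ_of_forall fun t => mem_padicBall_iff_norm_le.2 (by simpa using t.norm_le_one)

lemma padicBall_mem_nhds_zero (k : ℕ) : (padicBall p k : Set ℤ_[p]) ∈ nhds 0 := by
  have hp : (0 : ℝ) < p := mod_cast (Fact.out : p.Prime).pos
  filter_upwards [Metric.closedBall_mem_nhds (0 : ℤ_[p]) (zpow_pos hp (-k : ℤ))] with t ht
  exact mem_padicBall_iff_norm_le.2 (mem_closedBall_zero_iff.1 ht)

lemma measurableSet_padicBall (k : ℕ) : MeasurableSet (padicBall p k : Set ℤ_[p]) :=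
  ((padicBall p k).isOpen_of_mem_nhds (padicBall_mem_nhds_zero p k)).measurableSet

lemma index_padicBall (k : ℕ) : (padicBall p k).index = p ^ k := by
  let f : ℤ_[p] →+ ZMod (p ^ k) := (PadicInt.toZModPow k : ℤ_[p] →+* ZMod (p ^ k)).toAddMonoidHom
  have hker : padicBall p k = f.ker := by
    rw [padicBall, ← PadicInt.ker_toZModPow]
    rfl
  rw [hker, AddSubgroup.index_ker,
    AddMonoidHom.range_eq_top.2 (ZMod.ringHom_surjective (PadicInt.toZModPow k))]
  simp

variable {p}

lemma measureReal_padicBall (μ : Measure ℤ_[p]) [μ.IsAddLeftInvariant] [IsProbabilityMeasure μ]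
    (k : ℕ) : μ.real (padicBall p k) = ((p : ℝ) ^ k)⁻¹ := by
  have hindex : (padicBall p k).FiniteIndex :=
    ⟨by rw [index_padicBall]; exact pow_ne_zero k (Fact.out : p.Prime).ne_zero⟩
  rw [measureReal_addSubgroup_eq_inv_index μ _ (measurableSet_padicBall p k), index_padicBall,
    Nat.cast_pow]

lemma inv_norm_rpow_eq_pow_valuation (s : ℝ) {t : ℤ_[p]} (ht : t ≠ 0) :
    (‖t‖ ^ s)⁻¹ = ((p : ℝ) ^ s) ^ t.valuation := by
  have hp : (0 : ℝ) ≤ p := p.cast_nonneg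
  rw [PadicInt.norm_eq_zpow_neg_valuation ht, zpow_neg, zpow_natCast,
    Real.inv_rpow (by positivity), inv_inv, Real.rpow_pow_comm hp]

lemma inv_norm_rpow_eq_sum_indicator (s : ℝ) {t : ℤ_[p]} {M : ℕ} (ht : t ∉ padicBall p (M + 1)) :
    (‖t‖ ^ s)⁻¹ = 1 + ∑ k ∈ Finset.range M, (((p : ℝ) ^ s) ^ (k + 1) - ((p : ℝ) ^ s) ^ k) *
      (padicBall p (k + 1) : Set ℤ_[p]).indicator 1 t := by
  classical
  have ht0 : t ≠ 0 := fun h => ht (h ▸ zero_mem _)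
  have hv : t.valuation ≤ M := by
    rw [mem_padicBall_iff_le_valuation ht0] at ht
    lia
  have hrange : (Finset.range M).filter (fun k => t ∈ padicBall p (k + 1)) =
      Finset.range t.valuation := by
    ext k
    simp only [Finset.mem_filter, Finset.mem_range, mem_padicBall_iff_le_valuation ht0]
    lia
  simp only [Set.indicator_apply, SetLike.mem_coe, Pi.one_apply, mul_ite, mul_one, mul_zero]
  rw [← Finset.sum_filter, hrange, Finset.sum_range_sub, pow_zero, add_sub_cancel,
    inv_norm_rpow_eq_pow_valuation s ht0]

end Ball

section Conductor

variable {p}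

/-- `ψ` has conductor exponent `m` if `p^m ℤ_p` is the largest of the balls `p^k ℤ_p` on which
`ψ` is trivial. -/
def HasConductorExponent (ψ : AddChar ℤ_[p] ℂ) (m : ℕ) : Prop :=
  ∀ k, (∀ t ∈ padicBall p k, ψ t = 1) ↔ m ≤ k

lemma hasConductorExponent_eCharInt {a : ℚ_[p]} {m : ℕ} (ha : ‖a‖ = (p : ℝ) ^ m) :
    HasConductorExponent (eCharInt a) m := by
  have hp : (1 : ℝ) < p := mod_cast (Fact.out : p.Prime).one_lt
  intro k
  have hgen : (∀ t ∈ padicBall p k, eCharInt a t = 1) ↔ ‖(p : ℚ_[p]) ^ k * a‖ ≤ 1 := by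
    simp only [eCharInt_apply, eChar_eq_one_iff]
    refine ⟨fun h => ?_, fun h t ht => ?_⟩
    · simpa using h _ (Ideal.mem_span_singleton_self ((p : ℤ_[p]) ^ k))
    · obtain ⟨c, rfl⟩ := Ideal.mem_span_singleton.1 ht
      simpa [mul_comm, mul_left_comm] using (PadicInt.subring p).mul_mem c.2 h
  rw [hgen, norm_mul, Padic.norm_p_pow, ha, zpow_neg, zpow_natCast,
    inv_mul_le_one₀ (by positivity), pow_le_pow_iff_right₀ hp]

variable {ψ : AddChar ℤ_[p] ℂ} {m : ℕ}

lemma HasConductorExponent.continuous (hψ : HasConductorExponent ψ m) : Continuous ψ := by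
  refine continuous_addChar_of_eventually_eq_one ?_
  filter_upwards [padicBall_mem_nhds_zero p m] using (hψ m).2 le_rfl

lemma HasConductorExponent.integrable (hψ : HasConductorExponent ψ m) (μ : Measure ℤ_[p])
    [IsFiniteMeasure μ] : Integrable ψ μ :=
  hψ.continuous.integrable_of_hasCompactSupport (HasCompactSupport.of_compactSpace _)

variable (μ : Measure ℤ_[p]) [μ.IsAddLeftInvariant] [IsProbabilityMeasure μ]

lemma HasConductorExponent.setIntegral_sub_one (hψ : HasConductorExponent ψ m) {k : ℕ}
    (hk : k < m) : ∫ t in padicBall p k, (ψ t - 1) ∂μ = -((p : ℂ) ^ k)⁻¹ := by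
  have hnontrivial : ∃ t ∈ padicBall p k, ψ t ≠ 1 := by
    simpa using mt (hψ k).1 hk.not_ge
  obtain ⟨t, ht, hψt⟩ := hnontrivial
  rw [integral_sub (hψ.integrable μ).integrableOn (integrable_const 1),
    setIntegral_addChar_eq_zero μ ψ _ ht hψt, setIntegral_const, measureReal_padicBall]
  simp

lemma HasConductorExponent.sub_one_div_norm_rpow_eq_sum {M : ℕ}
    (hψ : HasConductorExponent ψ (M + 1)) (s : ℝ) (t : ℤ_[p]) :
    (ψ t - 1) / ((‖t‖ ^ s : ℝ) : ℂ) = (ψ t - 1) + ∑ k ∈ Finset.range M,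
      ((((p : ℝ) ^ s) ^ (k + 1) - ((p : ℝ) ^ s) ^ k : ℝ) : ℂ) *
        (padicBall p (k + 1) : Set ℤ_[p]).indicator (fun u => ψ u - 1) t := by
  by_cases ht : t ∈ padicBall p (M + 1)
  · have hψt : ψ t - 1 = 0 := sub_eq_zero.2 ((hψ (M + 1)).2 le_rfl t ht)
    have hindicator (k : ℕ) :
        (padicBall p k : Set ℤ_[p]).indicator (fun u => ψ u - 1) t = 0 :=
      Set.indicator_apply_eq_zero.2 fun _ => hψt
    simp [hψt, hindicator]
  · have hindicator (k : ℕ) : (padicBall p k : Set ℤ_[p]).indicator (fun u => ψ u - 1) t =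
        (ψ t - 1) * (((padicBall p k : Set ℤ_[p]).indicator 1 t : ℝ) : ℂ) := by
      by_cases htk : t ∈ padicBall p k <;> simp [htk]
    rw [div_eq_mul_inv, ← Complex.ofReal_inv, inv_norm_rpow_eq_sum_indicator s ht,
      Complex.ofReal_add, Complex.ofReal_one, mul_add, mul_one, Complex.ofReal_sum, Finset.mul_sum]
    simp only [hindicator, Complex.ofReal_mul, mul_left_comm]

lemma HasConductorExponent.integral_sub_one_div_norm_rpow {M : ℕ}
    (hψ : HasConductorExponent ψ (M + 1)) (s : ℝ) :
    ∫ t, (ψ t - 1) / ((‖t‖ ^ s : ℝ) : ℂ) ∂μ = ((-(1 + ∑ k ∈ Finset.range M,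
      (((p : ℝ) ^ s) ^ (k + 1) - ((p : ℝ) ^ s) ^ k) * ((p : ℝ) ^ (k + 1))⁻¹) : ℝ) : ℂ) := by
  have hint : Integrable (fun t => ψ t - 1) μ := (hψ.integrable μ).sub (integrable_const 1)
  have hball (k : ℕ) : Integrable
      ((padicBall p k : Set ℤ_[p]).indicator fun u => ψ u - 1) μ :=
    hint.indicator (measurableSet_padicBall p k)
  have htotal : ∫ t, (ψ t - 1) ∂μ = -1 := by
    simpa [coe_padicBall_zero] using hψ.setIntegral_sub_one μ M.succ_pos
  simp_rw [hψ.sub_one_div_norm_rpow_eq_sum s]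
  rw [integral_add hint (integrable_finsetSum _ fun k _ => (hball (k + 1)).const_mul _), htotal,
    integral_finsetSum _ fun k _ => (hball (k + 1)).const_mul _]
  push_cast
  rw [neg_add, ← Finset.sum_neg_distrib]
  congr 1
  refine Finset.sum_congr rfl fun k hk => ?_
  rw [integral_const_mul, integral_indicator (measurableSet_padicBall p (k + 1)),
    hψ.setIntegral_sub_one μ (by simpa using hk)]
  ring

end Conductor

section Operator

lemma one_sub_mul_neg_one_add_sum {K : Type*} [Field K] {A q : K} (hA : A ≠ 0) (hq : q ≠ 0)
    (M : ℕ) :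
    (1 - A) * -(1 + ∑ k ∈ Finset.range M, ((A * q) ^ (k + 1) - (A * q) ^ k) * (q ^ (k + 1))⁻¹) =
      A ^ (M + 1) * (1 - (A * q)⁻¹) - (1 - q⁻¹) := by
  have hterm (k : ℕ) : ((A * q) ^ (k + 1) - (A * q) ^ k) * (q ^ (k + 1))⁻¹ =
      A ^ k * (A - q⁻¹) := by
    field_simp
    ring
  simp only [hterm, ← Finset.sum_mul]
  calc (1 - A) * -(1 + (∑ k ∈ Finset.range M, A ^ k) * (A - q⁻¹))
      = (A - 1) + ((∑ k ∈ Finset.range M, A ^ k) * (A - 1)) * (A - q⁻¹) := by ring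
    _ = (A - 1) + (A ^ M - 1) * (A - q⁻¹) := by rw [geom_sum_mul]
    _ = A ^ (M + 1) * (1 - (A * q)⁻¹) - (1 - q⁻¹) := by
      field_simp
      ring

lemma vtConst_mul_eq_rpow_sub_vtShift {α : ℝ} (hα : α ≠ -1) (M : ℕ) :
    vtConst p α * -(1 + ∑ k ∈ Finset.range M, (((p : ℝ) ^ (α + 1)) ^ (k + 1) -
      ((p : ℝ) ^ (α + 1)) ^ k) * ((p : ℝ) ^ (k + 1))⁻¹) =
      ((p : ℝ) ^ (M + 1)) ^ α - vtShift p α := by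
  have hp0 : (0 : ℝ) < p := mod_cast (Fact.out : p.Prime).pos
  have hp1 : (p : ℝ) ≠ 1 := mod_cast (Fact.out : p.Prime).ne_one
  have hdenom : 1 - (p : ℝ) ^ (-(α + 1)) ≠ 0 := by
    intro h
    have hexponent : -(α + 1) = 0 :=
      (Real.rpow_right_inj hp0 hp1).1 (by rw [Real.rpow_zero, ← sub_eq_zero.1 h])
    exact hα (by linarith)
  have hpow : (p : ℝ) ^ (α + 1) = (p : ℝ) ^ α * p := Real.rpow_add_one hp0.ne' α
  have hinv : (p : ℝ) ^ (-(α + 1)) = ((p : ℝ) ^ α * p)⁻¹ := by rw [Real.rpow_neg hp0.le, hpow]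
  rw [vtConst, vtShift, div_mul_eq_mul_div, hpow,
    one_sub_mul_neg_one_add_sum (Real.rpow_pos_of_pos hp0 α).ne' hp0.ne', ← hinv, sub_div,
    mul_div_cancel_right₀ _ hdenom, Real.rpow_pow_comm hp0.le]

variable {d}

lemma dotQZ_sub_smul (ξ : Fin d → ℚ_[p]) (x V : Fin d → ℤ_[p]) (t : ℤ_[p]) :
    dotQZ p d ξ (x - t • V) = dotQZ p d ξ x + t * -dotQZ p d ξ V := by
  simp only [dotQZ, mul_neg, ← sub_eq_add_neg, Finset.mul_sum, ← Finset.sum_sub_distrib]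
  refine Finset.sum_congr rfl fun i _ => ?_
  simp only [Pi.sub_apply, Pi.smul_apply, smul_eq_mul, PadicInt.coe_sub, PadicInt.coe_mul]
  ring

lemma dirVT_eChar_dotQZ (α : ℝ) (V : Fin d → ℤ_[p]) (μ : Measure ℤ_[p]) (ξ : Fin d → ℚ_[p])
    (x : Fin d → ℤ_[p]) :
    dirVT p d α V μ (fun u => eChar p (dotQZ p d ξ u)) x =
      vtConst p α * (∫ t, (eCharInt (-dotQZ p d ξ V) t - 1) / ((‖t‖ ^ (α + 1) : ℝ) : ℂ) ∂μ) *
        eChar p (dotQZ p d ξ x) := by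
  have hquot (t : ℤ_[p]) : (eChar p (dotQZ p d ξ (x - t • V)) - eChar p (dotQZ p d ξ x)) /
      ((‖t‖ ^ (α + 1) : ℝ) : ℂ) = (eCharInt (-dotQZ p d ξ V) t - 1) /
        ((‖t‖ ^ (α + 1) : ℝ) : ℂ) * eChar p (dotQZ p d ξ x) := by
    rw [dotQZ_sub_smul, eChar_add, eCharInt_apply]
    ring
  simp only [dirVT, hquot, integral_mul_const, mul_assoc]

end Operator

theorem dirVT_eigenfunction_general (α : ℝ) (hα : α ≠ -1) (V : Fin d → ℤ_[p]) (ξ : Fin d → ℚ_[p])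
    (μ : Measure ℤ_[p]) (hinv : ∀ v : ℤ_[p], μ.map (· + v) = μ) (hprob : μ Set.univ = 1)
    (x : Fin d → ℤ_[p]) :
    dirVT p d α V μ (fun u => eChar p (dotQZ p d ξ u)) x =
      ((if 1 < ‖dotQZ p d ξ V‖ then (‖dotQZ p d ξ V‖ ^ α - vtShift p α : ℝ) else 0 : ℝ) : ℂ) *
        eChar p (dotQZ p d ξ x) := by
  have : IsProbabilityMeasure μ := ⟨hprob⟩
  have : μ.IsAddLeftInvariant := ⟨fun v => by simpa [add_comm] using hinv v⟩
  rw [dirVT_eChar_dotQZ]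
  congr 1
  split_ifs with hV
  · obtain ⟨M, hM⟩ := exists_norm_eq_pow_succ_of_one_lt_norm hV
    have hψ := hasConductorExponent_eCharInt ((norm_neg (dotQZ p d ξ V)).trans hM)
    rw [hψ.integral_sub_one_div_norm_rpow μ, ← Complex.ofReal_mul,
      vtConst_mul_eq_rpow_sub_vtShift p hα, hM]
  · have hψ : ‖-dotQZ p d ξ V‖ ≤ 1 := by rwa [norm_neg, ← not_lt]
    simp [eCharInt_eq_one hψ]

/-- The character `f(x) = e^{2πi{ξ·x}_p}` on `ℤ_p^d` is an eigenfunction of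
the directional Vladimirov–Taibleson operator `∂_V^α`, with eigenvalue
`|V·ξ|_p^α - (1-p^{-1})/(1-p^{-(α+1)})` when `|V·ξ|_p > 1`, and eigenvalue `0` when
`|V·ξ|_p ≤ 1`. -/
theorem dirVT_eigenfunction (α : ℝ) (hα : 0 < α) (V : Fin d → ℤ_[p]) (ξ : Fin d → ℚ_[p])
    (μ : Measure ℤ_[p]) (hinv : ∀ v : ℤ_[p], μ.map (· + v) = μ) (hprob : μ Set.univ = 1)
    (x : Fin d → ℤ_[p]) :
    dirVT p d α V μ (fun u => eChar p (dotQZ p d ξ u)) x =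
      ((if 1 < ‖dotQZ p d ξ V‖ then (‖dotQZ p d ξ V‖ ^ α - vtShift p α : ℝ) else 0 : ℝ) : ℂ) *
        eChar p (dotQZ p d ξ x) := by
  exact dirVT_eigenfunction_general p d α (by linarith) V ξ μ hinv hprob x
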